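/- Let G be a projection game, n ≥ 1, and let f : V × Σ × Fin n → ℝ be nonnegative. Then there exists a nonnegative f' : V × Σ × Fin n → ℝ such that every slice of f' is deterministic (for each v ∈ V and ω ∈ Fin n there is at most one β ∈ Σ with f'(v,β,ω) ≠ 0), such that for every v ∈ V, ∑_ω (∑_β f'(v,β,ω))² = ∑_ω (∑_β f(v,β,ω))², and such that E_u[∑_α ∑_ω (G f'_ω)(u,α)²] ≥ E_u[∑_α ∑_ω (G f_ω)(u,α)²], where f_ω and f'_ω denote the slices f(·,·,ω) and f'(·,·,ω). -/

import Mathlib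

open Finset

/-- A projection game: finite nonempty question sets `Q1` (Alice) and `Q2` (Bob),
a finite nonempty alphabet `A`, and a probability mass function `μ` on triples
`(u, v, π)` where `π : A → Option A` encodes a projection constraint
(the answer pair `(α, β)` satisfies `π` iff `π β = some α`). -/
structure ProjGame where
  Q1 : Type
  Q2 : Type
  A : Type
  [fQ1 : Fintype Q1]
  [fQ2 : Fintype Q2]
  [fA : Fintype A]
  [neQ1 : Nonempty Q1]
  [neQ2 : Nonempty Q2]
  [neA : Nonempty A]
  [dQ1 : DecidableEq Q1]
  [dQ2 : DecidableEq Q2]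
  [dA : DecidableEq A]
  μ : Q1 × Q2 × (A → Option A) → ℝ
  μ_nonneg : ∀ x, 0 ≤ μ x
  μ_sum : ∑ x, μ x = 1

attribute [instance] ProjGame.fQ1 ProjGame.fQ2 ProjGame.fA
  ProjGame.neQ1 ProjGame.neQ2 ProjGame.neA ProjGame.dQ1 ProjGame.dQ2 ProjGame.dA

namespace ProjGame

variable (G : ProjGame)

/-- The `U`-marginal (Alice-side marginal) of `μ`. -/
noncomputable def wU (u : G.Q1) : ℝ := ∑ v, ∑ π, G.μ (u, v, π)

/-- The `V`-marginal (Bob-side marginal) of `μ`. -/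
noncomputable def wV (v : G.Q2) : ℝ := ∑ u, ∑ π, G.μ (u, v, π)

/-- The game operator: `(Gf)(u,α) = E_{(v,π)|u} [∑_{β : π β = some α} f (v,β)]`. -/
noncomputable def op (f : G.Q2 × G.A → ℝ) : G.Q1 × G.A → ℝ :=
  fun p =>
    (∑ v, ∑ π, G.μ (p.1, v, π) * ∑ β, if π β = some p.2 then f (v, β) else 0) / G.wU p.1

/-- Squared norm on functions on `U × Σ`: `‖g‖² = E_u [∑_α g(u,α)²]`. -/
noncomputable def normUsq (g : G.Q1 × G.A → ℝ) : ℝ := ∑ u, G.wU u * ∑ α, (g (u, α)) ^ 2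

/-- Squared norm on functions on `V × Σ`: `‖f‖² = E_v [∑_β f(v,β)²]`. -/
noncomputable def normVsq (f : G.Q2 × G.A → ℝ) : ℝ := ∑ v, G.wV v * ∑ β, (f (v, β)) ^ 2

/-- Inner product `⟨g, g'⟩ = E_u [∑_α g(u,α) g'(u,α)]`. -/
noncomputable def inn (g g' : G.Q1 × G.A → ℝ) : ℝ :=
  ∑ u, G.wU u * ∑ α, g (u, α) * g' (u, α)

/-- An assignment for Bob. -/
def IsBob (f : G.Q2 × G.A → ℝ) : Prop := (∀ p, 0 ≤ f p) ∧ ∀ v, ∑ β, f (v, β) = 1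

/-- An assignment for Alice. -/
def IsAlice (g : G.Q1 × G.A → ℝ) : Prop := (∀ p, 0 ≤ g p) ∧ ∀ u, ∑ α, g (u, α) = 1

/-- The value of the game: `val(G) = max ⟨g, Gf⟩` over assignments. -/
noncomputable def val : ℝ :=
  sSup { x | ∃ f g, G.IsBob f ∧ G.IsAlice g ∧ x = G.inn g (G.op f) }

/-- The collision value `‖G‖ = max_f ‖Gf‖` over assignments `f` for Bob. -/
noncomputable def collVal : ℝ :=
  sSup { x | ∃ f, G.IsBob f ∧ x = Real.sqrt (G.normUsq (G.op f)) }

/-- Product of projection constraints. -/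
def tensorC {A A' : Type} (π : A → Option A) (π' : A' → Option A') :
    A × A' → Option (A × A') :=
  fun b => (π b.1).bind fun a => (π' b.2).map fun a' => (a, a')

/-- The product (parallel repetition) of two projection games. -/
noncomputable def tensor (G H : ProjGame) : ProjGame where
  Q1 := G.Q1 × H.Q1
  Q2 := G.Q2 × H.Q2
  A := G.A × H.A
  μ := fun x =>
    ∑ y : (G.Q1 × G.Q2 × (G.A → Option G.A)) × (H.Q1 × H.Q2 × (H.A → Option H.A)),
      if ((y.1.1, y.2.1), (y.1.2.1, y.2.2.1), tensorC y.1.2.2 y.2.2.2) = x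
      then G.μ y.1 * H.μ y.2 else 0
  μ_nonneg := by
    intro x
    refine Finset.sum_nonneg fun y _ => ?_
    split
    · exact mul_nonneg (G.μ_nonneg _) (H.μ_nonneg _)
    · exact le_refl 0
  μ_sum := by
    rw [Finset.sum_comm]
    simp only [Finset.sum_ite_eq, Finset.mem_univ, if_true]
    rw [Fintype.sum_prod_type]
    calc (∑ y1, ∑ y2, G.μ y1 * H.μ y2)
        = (∑ y1, G.μ y1) * (∑ y2, H.μ y2) := by rw [Finset.sum_mul_sum]
      _ = 1 := by rw [G.μ_sum, H.μ_sum, mul_one]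

/-- `G.iterTensor k` is the `(k+1)`-fold parallel repetition `G^{⊗(k+1)}`. -/
noncomputable def iterTensor (G : ProjGame) : ℕ → ProjGame
  | 0 => G
  | n + 1 => G.tensor (G.iterTensor n)

/-- `val₊(G)`: supremum of values of vector assignments. -/
noncomputable def valPlus (G : ProjGame) : ℝ :=
  sSup { x | ∃ n : ℕ, 0 < n ∧ ∃ f : G.Q2 × G.A → Fin n → ℝ,
    (∀ p i, 0 ≤ f p i) ∧
    (∀ v, Real.sqrt (∑ i, (∑ β, f (v, β) i) ^ 2) ≤ 1) ∧
    x = Real.sqrt (∑ u, G.wU u * ∑ α, ∑ i, (G.op (fun q => f q i) (u, α)) ^ 2) }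

/-- `‖Th‖² = E_v [(∑_β h(v,β))²]`. -/
noncomputable def Tnormsq (G : ProjGame) (h : G.Q2 × G.A → ℝ) : ℝ :=
  ∑ v, G.wV v * (∑ β, h (v, β)) ^ 2

/-- `λ₊(G)`: supremum of `‖Gh‖/‖Th‖` over nonnegative `h` with `‖Th‖ > 0`. -/
noncomputable def lambdaPlus (G : ProjGame) : ℝ :=
  sSup { x | ∃ h : G.Q2 × G.A → ℝ, (∀ p, 0 ≤ h p) ∧
    0 < Real.sqrt (G.Tnormsq h) ∧
    x = Real.sqrt (G.normUsq (G.op h)) / Real.sqrt (G.Tnormsq h) }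

/-- The symmetrized distribution on `V × V` (with the constraints marginalized out). -/
noncomputable def msym (G : ProjGame) (v v' : G.Q2) : ℝ :=
  ∑ u, ((∑ π, G.μ (u, v, π)) * (∑ π', G.μ (u, v', π'))) / G.wU u

/-- `G` is `γ`-expanding: the Markov operator of the symmetrized constraint graph has
spectral gap at least `γ`, i.e. `|⟨x, Ax⟩| ≤ (1-γ) E_v[x(v)²]` for mean-zero `x`. -/
def IsExpanding (G : ProjGame) (γ : ℝ) : Prop :=
  ∀ x : G.Q2 → ℝ, (∑ v, G.wV v * x v) = 0 →
    |∑ v, ∑ v', G.msym v v' * x v * x v'| ≤ (1 - γ) * ∑ v, G.wV v * (x v) ^ 2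

/-- The symmetrized distribution on `(v, v', π, π')`. -/
noncomputable def msymFull (G : ProjGame) (v v' : G.Q2) (π π' : G.A → Option G.A) : ℝ :=
  ∑ u, (G.μ (u, v, π) * G.μ (u, v', π')) / G.wU u

/-- The value of the assignment `x` in the symmetrized game `G_sym`. -/
noncomputable def symValAssign (G : ProjGame) (x : G.Q2 → G.A) : ℝ :=
  ∑ v, ∑ v', ∑ π, ∑ π', G.msymFull v v' π π' *
    (if ∃ α, π (x v) = some α ∧ π' (x v') = some α then 1 else 0)

/-- The value of the symmetrized game `G_sym`. -/
noncomputable def symVal (G : ProjGame) : ℝ :=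
  sSup { r | ∃ x : G.Q2 → G.A, r = G.symValAssign x }

end ProjGame

/-!
The value `‖G h‖²` of a single slice `h` is a convex function of `h`. For each `v`, the vector
`h (v, ·)` lies in the simplex of nonnegative vectors with its total mass, so `h` lies in a
product of simplices. A convex function on this product is maximal at a vertex, and a vertex puts
the whole mass of each `v` on a single answer.
-/

theorem mem_convexHull_range_single_sum {𝕜 A : Type*} [Field 𝕜] [LinearOrder 𝕜]
    [IsStrictOrderedRing 𝕜] [Fintype A] [DecidableEq A] [Nonempty A] {g : A → 𝕜} (hg : 0 ≤ g) :
    g ∈ convexHull 𝕜 (Set.range fun b : A ↦ (Pi.single b (∑ a, g a) : A → 𝕜)) := by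
  rcases (Fintype.sum_nonneg hg).eq_or_lt with hsum | hsum
  · have hzero : g = 0 := (Fintype.sum_eq_zero_iff_of_nonneg hg).1 hsum.symm
    exact subset_convexHull 𝕜 _ ⟨Classical.arbitrary A, by simp [hzero]⟩
  · have hcenter : univ.centerMass g (fun b ↦ (Pi.single b (∑ a, g a) : A → 𝕜)) = g := by
      ext a
      simp [centerMass, Finset.sum_apply, Pi.single_apply, hsum.ne', mul_comm (g a)]
    have hmem := univ.centerMass_mem_convexHull (fun b _ ↦ hg b) hsum fun b _ ↦
      Set.mem_range_self (f := fun b : A ↦ (Pi.single b (∑ a, g a) : A → 𝕜)) b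
    rwa [hcenter] at hmem

theorem exists_le_single_sum_of_convexOn {𝕜 β ι A : Type*} [Field 𝕜] [LinearOrder 𝕜]
    [IsStrictOrderedRing 𝕜] [AddCommGroup β] [LinearOrder β] [IsOrderedAddMonoid β] [Module 𝕜 β]
    [IsStrictOrderedModule 𝕜 β] [Finite ι] [Fintype A] [DecidableEq A] [Nonempty A]
    {F : (ι → A → 𝕜) → β} (hF : ConvexOn 𝕜 (Set.Ici 0) F) {g : ι → A → 𝕜} (hg : 0 ≤ g) :
    ∃ s : ι → A, F g ≤ F fun i ↦ Pi.single (s i) (∑ a, g i a) := by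
  let vertices : Set (ι → A → 𝕜) :=
    Set.univ.pi fun i ↦ Set.range fun b : A ↦ Pi.single b (∑ a, g i a)
  have hmem : g ∈ convexHull 𝕜 vertices :=
    mem_convexHull_pi fun i _ ↦ mem_convexHull_range_single_sum (hg i)
  have hvertices : vertices ⊆ Set.Ici 0 := fun h hh i ↦ by
    obtain ⟨b, hb⟩ := hh i trivial
    simpa [← hb] using Fintype.sum_nonneg (hg i)
  obtain ⟨h, hh, hle⟩ := hF.exists_ge_of_mem_convexHull hvertices hmem
  choose s hs using fun i ↦ hh i trivial
  exact ⟨s, by simpa only [hs] using hle⟩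

theorem convexOn_finset_sum {𝕜 E β ι : Type*} [Semiring 𝕜] [PartialOrder 𝕜] [AddCommMonoid E]
    [SMul 𝕜 E] [AddCommMonoid β] [PartialOrder β] [IsOrderedAddMonoid β] [Module 𝕜 β]
    {s : Set E} (hs : Convex 𝕜 s) (t : Finset ι) {F : ι → E → β}
    (hF : ∀ i ∈ t, ConvexOn 𝕜 s (F i)) : ConvexOn 𝕜 s fun x ↦ ∑ i ∈ t, F i x := by
  simpa only [Finset.sum_fn] using
    Finset.sum_induction F (ConvexOn 𝕜 s) (fun _ _ ↦ ConvexOn.add) (convexOn_const 0 hs) hF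

namespace ProjGame

variable (G : ProjGame)

theorem wU_nonneg (u : G.Q1) : 0 ≤ G.wU u :=
  sum_nonneg fun _ _ ↦ sum_nonneg fun _ _ ↦ G.μ_nonneg _

theorem convexOn_normUsq : ConvexOn ℝ Set.univ G.normUsq := by
  have hcoord (p : G.Q1 × G.A) :
      ConvexOn ℝ Set.univ fun g : G.Q1 × G.A → ℝ ↦ g p ^ 2 :=
    (even_two.convexOn_pow (𝕜 := ℝ)).comp_linearMap (LinearMap.proj (φ := fun _ ↦ ℝ) p)
  exact convexOn_finset_sum convex_univ _ fun u _ ↦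
    (convexOn_finset_sum convex_univ _ fun α _ ↦ hcoord (u, α)).smul (G.wU_nonneg u)

theorem sum_normUsq {Ω : Type*} [Fintype Ω] (g : Ω → G.Q1 × G.A → ℝ) :
    ∑ ω, G.normUsq (g ω) = ∑ u, G.wU u * ∑ α, ∑ ω, g ω (u, α) ^ 2 := by
  simp only [normUsq]
  rw [sum_comm]
  refine sum_congr rfl fun u _ ↦ ?_
  rw [← mul_sum, sum_comm]

/-- The game operator `h ↦ G h` as a linear map, so that convexity can be pulled back along it. -/
noncomputable def opLinearMap : (G.Q2 × G.A → ℝ) →ₗ[ℝ] (G.Q1 × G.A → ℝ) where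
  toFun := G.op
  map_add' h k := by
    ext p
    simp only [op, Pi.add_apply, ite_add_zero, sum_add_distrib, mul_add, add_div]
  map_smul' c h := by
    ext p
    simp only [op, Pi.smul_apply, smul_eq_mul, RingHom.id_apply, ← mul_ite_zero, ← mul_sum,
      mul_left_comm _ c, mul_div_assoc]

/-- The deterministic slice obtained from `h` by moving, for each question `v`, the total mass
`∑ β, h (v, β)` onto the single answer `s v`. -/
noncomputable def concentrate (h : G.Q2 × G.A → ℝ) (s : G.Q2 → G.A) : G.Q2 × G.A → ℝ :=
  fun p ↦ (Pi.single (s p.1) (∑ β, h (p.1, β)) : G.A → ℝ) p.2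

variable {G}

theorem concentrate_nonneg {h : G.Q2 × G.A → ℝ} (hh : 0 ≤ h) (s : G.Q2 → G.A) :
    0 ≤ G.concentrate h s := fun p ↦
  Pi.single_nonneg (α := fun _ ↦ ℝ).2 (sum_nonneg fun β _ ↦ hh (p.1, β)) p.2

theorem eq_of_concentrate_ne_zero {h : G.Q2 × G.A → ℝ} {s : G.Q2 → G.A} {v : G.Q2} {β : G.A}
    (hβ : G.concentrate h s (v, β) ≠ 0) : β = s v := by
  contrapose! hβ
  exact Pi.single_eq_of_ne hβ _

theorem sum_concentrate (h : G.Q2 × G.A → ℝ) (s : G.Q2 → G.A) (v : G.Q2) :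
    ∑ β, G.concentrate h s (v, β) = ∑ β, h (v, β) :=
  Fintype.sum_pi_single' (s v) (∑ β, h (v, β))

theorem exists_normUsq_op_le_concentrate {h : G.Q2 × G.A → ℝ} (hh : 0 ≤ h) :
    ∃ s : G.Q2 → G.A, G.normUsq (G.op h) ≤ G.normUsq (G.op (G.concentrate h s)) := by
  have hconvex := G.convexOn_normUsq.comp_linearMap
    (G.opLinearMap ∘ₗ (LinearEquiv.curry ℝ ℝ G.Q2 G.A).symm.toLinearMap)
  exact exists_le_single_sum_of_convexOn (hconvex.subset (Set.subset_univ _) (convex_Ici 0))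
    (g := Function.curry h) fun v β ↦ hh (v, β)

end ProjGame

theorem exists_deterministic_vector_assignment_general (G : ProjGame) {Ω : Type*}
    (f : G.Q2 × G.A × Ω → ℝ) (hf : ∀ p, 0 ≤ f p) :
    ∃ f' : G.Q2 × G.A × Ω → ℝ,
      (∀ p, 0 ≤ f' p) ∧
      (∀ (v : G.Q2) (ω : Ω) (β β' : G.A),
        f' (v, β, ω) ≠ 0 → f' (v, β', ω) ≠ 0 → β = β') ∧
      (∀ (v : G.Q2) (ω : Ω), ∑ β, f' (v, β, ω) = ∑ β, f (v, β, ω)) ∧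
      (∀ ω : Ω, G.normUsq (G.op fun q ↦ f (q.1, q.2, ω)) ≤
        G.normUsq (G.op fun q ↦ f' (q.1, q.2, ω))) := by
  let slice (ω : Ω) : G.Q2 × G.A → ℝ := fun q ↦ f (q.1, q.2, ω)
  have hslice (ω : Ω) : 0 ≤ slice ω := fun _ ↦ hf _
  choose s hs using fun ω ↦ ProjGame.exists_normUsq_op_le_concentrate (hslice ω)
  refine ⟨fun p ↦ G.concentrate (slice p.2.2) (s p.2.2) (p.1, p.2.1), fun p ↦ ?_,
    fun v ω β β' hβ hβ' ↦ ?_, fun v ω ↦ ?_, hs⟩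
  · exact ProjGame.concentrate_nonneg (hslice p.2.2) _ _
  · exact (ProjGame.eq_of_concentrate_ne_zero hβ).trans
      (ProjGame.eq_of_concentrate_ne_zero hβ').symm
  · exact ProjGame.sum_concentrate (slice ω) (s ω) v

/-- **Determinization of vector assignments.** Any nonnegative
`f : V × Σ × Fin n → ℝ` can be replaced by a nonnegative `f'` whose slices are
deterministic, preserving `∑_ω (∑_β f(v,β,ω))²` for every `v` and not decreasing
`E_u[∑_α ∑_ω (G f_ω)(u,α)²]`. -/
theorem exists_deterministic_vector_assignment (G : ProjGame) (n : ℕ) (hn : 1 ≤ n)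
    (f : G.Q2 × G.A × Fin n → ℝ) (hf : ∀ p, 0 ≤ f p) :
    ∃ f' : G.Q2 × G.A × Fin n → ℝ,
      (∀ p, 0 ≤ f' p) ∧
      (∀ (v : G.Q2) (ω : Fin n) (β β' : G.A),
        f' (v, β, ω) ≠ 0 → f' (v, β', ω) ≠ 0 → β = β') ∧
      (∀ v : G.Q2, ∑ ω, (∑ β, f' (v, β, ω)) ^ 2 = ∑ ω, (∑ β, f (v, β, ω)) ^ 2) ∧
      (∑ u, G.wU u * ∑ α, ∑ ω, (G.op (fun q => f (q.1, q.2, ω)) (u, α)) ^ 2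
        ≤ ∑ u, G.wU u * ∑ α, ∑ ω, (G.op (fun q => f' (q.1, q.2, ω)) (u, α)) ^ 2) := by
  obtain ⟨f', hnonneg, hdet, hmass, hle⟩ := exists_deterministic_vector_assignment_general G f hf
  exact ⟨f', hnonneg, hdet, fun v ↦ by simp only [hmass], by
    simpa only [G.sum_normUsq] using sum_le_sum fun ω (_ : ω ∈ univ) ↦ hle ω⟩
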